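/- arXiv:1604.07088 — 3 statements merged into one kernel-verified Lean document; each statement's English description precedes it below -/
import Mathlib

section
/- Let c ∈ ℝ² with ‖c‖ = v, let 0 < v < r1, and let g : ℝ → ℝ be a nonnegative measurable function. Then ∫_{B(c, r1) \ B(O, r1 − v)} g(‖y‖) dy = ∫_{r1−v}^{r1+v} 2·arccos((r² + v² − r1²)/(2 r v))·g(r)·r dr, where the left side is the integral of y ↦ g(‖y‖) over the set B(c, r1) \ B(O, r1 − v) with respect to 2-dimensional Lebesgue measure. -/
/-! A linear isometry `ℂ ≃ EuclideanSpace ℝ (Fin 2)` sending the positive real `v` to `c` preserves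
Lebesgue measure, norms and distances, so the problem may be posed in `ℂ` with the off-center disk
centered at `v`. In polar coordinates `z = r e^{iθ}` with `r > 0` and `|θ| < π`, the law of cosines
turns `‖z - v‖ < r1` into `(r² + v² - r1²) / (2 r v) < cos θ`. For `r ≥ r1 - v` the left side is at
least `-1`, so this says exactly `|θ| < arccos ((r² + v² - r1²) / (2 r v))`
(`lt_cos_iff_mem_Ioo_arccos`), an arc of width twice that arccosine. Tonelli's theorem reduces the
integral to one over `r ≥ r1 - v`, and the integrand vanishes for `r ≥ r1 + v`, where the arccosine
is `0`. -/

open MeasureTheory Metric Real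

/-- The coordinate isometry precomposed with the rotation of `ℂ` by the argument of `c`. -/
lemma exists_linearIsometryEquiv_ofReal_eq (c : EuclideanSpace ℝ (Fin 2)) (v : ℝ)
    (hc : ‖c‖ = v) (hv : 0 < v) :
    ∃ e : ℂ ≃ₗᵢ[ℝ] EuclideanSpace ℝ (Fin 2), e (v : ℂ) = c := by
  let p := Complex.orthonormalBasisOneI.repr
  have hn : ‖p.symm c / (v : ℂ)‖ = 1 := by
    rw [norm_div, p.symm.norm_map, hc, Complex.norm_real, Real.norm_of_nonneg hv.le,
      div_self hv.ne']
  let u : Circle := ⟨p.symm c / (v : ℂ), by simpa [Submonoid.unitSphere] using hn⟩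
  refine ⟨(rotation u).trans p, ?_⟩
  have hv' : (v : ℂ) ≠ 0 := by exact_mod_cast hv.ne'
  have : rotation u (v : ℂ) = p.symm c := by
    rw [rotation_apply]
    exact div_mul_cancel₀ _ hv'
  simp [this]

/-- Only the lower bound on `x` is needed: for `x ≥ 1` both sides are false, as `arccos x = 0`. -/
lemma lt_cos_iff_mem_Ioo_arccos {x θ : ℝ} (hx : -1 ≤ x) (hθ : θ ∈ Set.Ioo (-π) π) :
    x < cos θ ↔ θ ∈ Set.Ioo (-arccos x) (arccos x) := by
  have habs : |θ| ≤ π := abs_le.2 ⟨hθ.1.le, hθ.2.le⟩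
  rw [Set.mem_Ioo, ← abs_lt, ← cos_abs θ]
  conv_rhs => rw [← arccos_cos (abs_nonneg θ) habs]
  constructor
  · intro h
    exact strictAntiOn_arccos ⟨hx, h.le.trans (cos_le_one _)⟩ ⟨neg_one_le_cos _, cos_le_one _⟩ h
  · intro h
    by_contra! h'
    exact absurd (antitone_arccos h') (not_le.2 h)

/-- The law of cosines, in the form of membership in the off-center disk. -/
lemma norm_polar_sub_lt_iff {r v r1 θ : ℝ} (hr : 0 < r) (hv : 0 < v) (hr1 : 0 < r1) :
    ‖Complex.polarCoord.symm (r, θ) - (v : ℂ)‖ < r1 ↔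
      (r ^ 2 + v ^ 2 - r1 ^ 2) / (2 * r * v) < cos θ := by
  have h : ‖Complex.polarCoord.symm (r, θ) - (v : ℂ)‖ ^ 2
      = r ^ 2 + v ^ 2 - 2 * r * v * cos θ := by
    rw [Complex.polarCoord_symm_apply, ← Complex.normSq_eq_norm_sq, Complex.normSq_apply]
    simp [-Complex.ofReal_cos, -Complex.ofReal_sin]
    linear_combination r ^ 2 * sin_sq_add_cos_sq θ
  rw [← sq_lt_sq₀ (norm_nonneg _) hr1.le, h, div_lt_iff₀ (by positivity)]
  constructor <;> intro h <;> linarith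

/-- Integral over the circle of radius `r`: for `r ≥ r1 - v` the integrand is constant on an arc of
half-width `arccos ((r² + v² - r1²) / (2 r v))` and zero off it; for smaller `r` it vanishes. -/
lemma lintegral_circle {v r1 r : ℝ} (hv : 0 < v) (hlt : v < r1) (g : ℝ → ℝ)
    (hg0 : ∀ x, 0 ≤ g x) (hr : 0 < r) :
    ∫⁻ θ in Set.Ioo (-π) π, ENNReal.ofReal r •
      (ball (v : ℂ) r1 \ ball (0 : ℂ) (r1 - v)).indicator (fun z => ENNReal.ofReal (g ‖z‖))
        (Complex.polarCoord.symm (r, θ))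
    = (Set.Ici (r1 - v)).indicator (fun r => ENNReal.ofReal
        (2 * Real.arccos ((r ^ 2 + v ^ 2 - r1 ^ 2) / (2 * r * v)) * g r * r)) r := by
  have hnorm : ∀ θ, ‖Complex.polarCoord.symm (r, θ)‖ = r := fun θ => by
    rw [Complex.norm_polarCoord_symm]; exact abs_of_pos hr
  by_cases hr' : r1 - v ≤ r
  · rw [Set.indicator_of_mem (Set.mem_Ici.2 hr')]
    set x := (r ^ 2 + v ^ 2 - r1 ^ 2) / (2 * r * v) with hx
    -- Equivalent to `(r + v)² ≥ r1²`, which is `r ≥ r1 - v`.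
    have hx1 : -1 ≤ x := by
      rw [hx, le_div_iff₀ (by positivity)]
      nlinarith
    have hsub : Set.Ioo (-arccos x) (arccos x) ⊆ Set.Ioo (-π) π :=
      Set.Ioo_subset_Ioo (neg_le_neg (arccos_le_pi x)) (arccos_le_pi x)
    rw [setLIntegral_congr_fun (g := (Set.Ioo (-arccos x) (arccos x)).indicator
      (fun _ => ENNReal.ofReal (r * g r))) measurableSet_Ioo ?_]
    · rw [lintegral_indicator measurableSet_Ioo, Measure.restrict_restrict measurableSet_Ioo,
        Set.inter_eq_left.2 hsub, setLIntegral_const, Real.volume_Ioo,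
        ← ENNReal.ofReal_mul (mul_nonneg hr.le (hg0 r))]
      congr 1
      ring
    · intro θ hθ
      have hmem : Complex.polarCoord.symm (r, θ) ∈ ball (v : ℂ) r1 \ ball (0 : ℂ) (r1 - v) ↔
          θ ∈ Set.Ioo (-arccos x) (arccos x) := by
        rw [← lt_cos_iff_mem_Ioo_arccos hx1 hθ, hx,
          ← norm_polar_sub_lt_iff hr hv (hv.trans hlt), Set.mem_sdiff, mem_ball, mem_ball,
          dist_eq_norm, dist_zero_right, hnorm, not_lt]
        exact and_iff_left hr'
      by_cases h : θ ∈ Set.Ioo (-arccos x) (arccos x)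
      · simp only [Set.indicator_of_mem h, Set.indicator_of_mem (hmem.2 h), hnorm, smul_eq_mul,
          ENNReal.ofReal_mul hr.le]
      · simp only [Set.indicator_of_notMem h, Set.indicator_of_notMem (mt hmem.1 h), smul_zero]
  · rw [Set.indicator_of_notMem (by simpa using hr')]
    have : ∀ θ, Complex.polarCoord.symm (r, θ) ∉ ball (v : ℂ) r1 \ ball (0 : ℂ) (r1 - v) := by
      intro θ h
      have h2 := h.2
      rw [mem_ball, dist_zero_right, hnorm, not_lt] at h2
      exact hr' h2
    simp only [Set.indicator_of_notMem (this _), smul_zero, lintegral_zero]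

/-- Polar-coordinate identity for an integral of a radially symmetric function over
`B(c, r1) \ B(O, r1 − v)` when `0 < v = ‖c‖ < r1`. -/
theorem integral_radial_over_offcenter_disk_minus_inner (c : EuclideanSpace ℝ (Fin 2))
    (v r1 : ℝ) (hc : ‖c‖ = v) (hv : 0 < v) (hlt : v < r1)
    (g : ℝ → ℝ) (hg : Measurable g) (hg0 : ∀ x, 0 ≤ g x) :
    ∫⁻ y in ball c r1 \ ball (0 : EuclideanSpace ℝ (Fin 2)) (r1 - v),
        ENNReal.ofReal (g ‖y‖) ∂volume
      = ∫⁻ r in Set.Ioo (r1 - v) (r1 + v),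
          ENNReal.ofReal
            (2 * Real.arccos ((r ^ 2 + v ^ 2 - r1 ^ 2) / (2 * r * v)) * g r * r) ∂volume := by
  obtain ⟨e, he⟩ := exists_linearIsometryEquiv_ofReal_eq c v hc hv
  have hpre : e ⁻¹' (ball c r1 \ ball 0 (r1 - v)) = ball (v : ℂ) r1 \ ball (0 : ℂ) (r1 - v) := by
    rw [Set.preimage_sdiff, ← he, e.preimage_ball, e.preimage_ball]
    simp
  have hS : MeasurableSet (ball (v : ℂ) r1 \ ball (0 : ℂ) (r1 - v)) :=
    measurableSet_ball.diff measurableSet_ball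
  rw [← e.measurePreserving.setLIntegral_comp_preimage_emb
    e.toHomeomorph.measurableEmbedding, hpre]
  simp only [e.norm_map]
  rw [← lintegral_indicator hS, ← Complex.lintegral_comp_polarCoord_symm, polarCoord_target,
    Measure.volume_eq_prod, setLIntegral_prod]
  · rw [setLIntegral_congr_fun measurableSet_Ioi
      (fun r hr => lintegral_circle hv hlt g hg0 hr), lintegral_indicator measurableSet_Ici,
      Measure.restrict_restrict measurableSet_Ici,
      Set.inter_eq_left.2 (Set.Ici_subset_Ioi.2 (sub_pos.2 hlt)),
      setLIntegral_congr Ioi_ae_eq_Ici.symm]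
    rw [← Set.Ioo_union_Ici_eq_Ioi (show r1 - v < r1 + v by linarith),
      lintegral_union measurableSet_Ici
        ((Set.Iio_disjoint_Ici le_rfl).mono_left Set.Ioo_subset_Iio_self)]
    -- Beyond `r1 + v` the circle misses the off-center disk: the arccosine is `0`.
    refine (congrArg _ ?_).trans (add_zero _)
    · refine setLIntegral_eq_zero measurableSet_Ici fun r hr => ?_
      have hr1 : r1 + v ≤ r := hr
      have hrpos : 0 < r := by linarith
      have h1 : 1 ≤ (r ^ 2 + v ^ 2 - r1 ^ 2) / (2 * r * v) := by
        rw [le_div_iff₀ (by positivity)]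
        -- This is `(r - v)² ≥ r1²`.
        nlinarith
      simp [arccos_eq_zero.2 h1]
  · have hm : Measurable (Complex.polarCoord.symm : ℝ × ℝ → ℂ) := by
      have : (Complex.polarCoord.symm : ℝ × ℝ → ℂ)
          = fun p => p.1 * (Real.cos p.2 + Real.sin p.2 * Complex.I) :=
        funext Complex.polarCoord_symm_apply
      rw [this]
      fun_prop
    have hF : Measurable ((ball (v : ℂ) r1 \ ball (0 : ℂ) (r1 - v)).indicator
        (fun z => ENNReal.ofReal (g ‖z‖))) :=
      (hg.comp measurable_norm).ennreal_ofReal.indicator hS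
    exact ((measurable_fst.ennreal_ofReal).mul (hF.comp hm)).aemeasurable
end

section
/- Let c ∈ ℝ² with ‖c‖ = v, let r1, r2, v > 0 satisfy r2 − r1 < v < r1 + r2 and r2 ≥ |v − r1|, and let g : ℝ → ℝ be a nonnegative measurable function. Then ∫_{B(c, r1) \ B(O, r2)} g(‖y‖) dy = ∫_{r2}^{v+r1} 2·arccos((r² + v² − r1²)/(2 r v))·g(r)·r dr. -/
/-!
The identity is integration in polar coordinates. An isometry from `ℂ` onto the plane carrying the
positive real `v` to `c` (a rotation composed with the standard identification) preserves Lebesgue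
measure and norms, so the integral may be computed over `ball v r1 \ ball 0 r2` in `ℂ`
(`lintegral_lune_eq_complex`). For `r > 0`, the law of cosines shows that the point `r e^{iθ}` lies
in `ball v r1` exactly when `cos θ > a`, where `a = (r² + v² - r1²) / (2 r v)`
(`polar_mem_ball_iff`). The angles `θ ∈ (-π, π)` with `cos θ > a` form the interval
`(-arccos a, arccos a)` (`setOf_lt_cos`), whose length is the width `2 arccos a`. This holds for
every real `a`, because `Real.arccos` is constant outside `[-1, 1]`. Tonelli's theorem then gives an
integral over `r ≥ r2`, whose integrand vanishes for `r ≥ v + r1` since `a ≥ 1` there.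
-/

open MeasureTheory Metric Real

/-- The bound `θ < π` is strict because `arccos a = π` for every `a ≤ -1`. -/
lemma lt_arccos_iff_of_mem {a θ : ℝ} (h0 : 0 ≤ θ) (hπ : θ < π) : θ < arccos a ↔ a < cos θ := by
  constructor
  · contrapose!
    intro h
    have := arccos_le_arccos h
    rwa [arccos_cos h0 hπ.le] at this
  · intro h
    rcases le_total a (-1) with ha | ha
    · rwa [arccos_of_le_neg_one ha]
    · have := arccos_lt_arccos ha h (cos_le_one θ)
      rwa [arccos_cos h0 hπ.le] at this

lemma setOf_lt_cos (a : ℝ) :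
    {θ | a < cos θ} ∩ Set.Ioo (-π) π = Set.Ioo (-arccos a) (arccos a) := by
  ext θ
  simp only [Set.mem_inter_iff, Set.mem_ofPred_eq, Set.mem_Ioo, ← abs_lt]
  constructor
  · rintro ⟨h, hπ⟩
    rwa [lt_arccos_iff_of_mem (abs_nonneg θ) hπ, cos_abs]
  · intro h
    have hπ := h.trans_le (arccos_le_pi a)
    rw [lt_arccos_iff_of_mem (abs_nonneg θ) hπ, cos_abs] at h
    exact ⟨h, hπ⟩

/-- The law of cosines, solved for the cosine of the angle. -/
lemma polar_mem_ball_iff {r v r1 θ : ℝ} (hr : 0 < r) (hv : 0 < v) (hr1 : 0 < r1) :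
    Complex.polarCoord.symm (r, θ) ∈ ball (v : ℂ) r1 ↔
      (r ^ 2 + v ^ 2 - r1 ^ 2) / (2 * r * v) < cos θ := by
  have hsq : ‖Complex.polarCoord.symm (r, θ) - v‖ ^ 2 = r ^ 2 + v ^ 2 - 2 * r * v * cos θ := by
    rw [← Complex.normSq_eq_norm_sq, Complex.polarCoord_symm_apply, Complex.normSq_apply]
    simp only [Complex.sub_re, Complex.sub_im, Complex.mul_re, Complex.mul_im, Complex.add_re,
      Complex.add_im, Complex.ofReal_re, Complex.ofReal_im, Complex.I_re, Complex.I_im]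
    linear_combination r ^ 2 * sin_sq_add_cos_sq θ
  rw [mem_ball, dist_eq_norm, ← sq_lt_sq₀ (norm_nonneg _) hr1.le, hsq, div_lt_iff₀ (by positivity)]
  constructor <;> intro h <;> linarith

/-- A linear isometry `ℂ ≃ EuclideanSpace ℝ (Fin 2)` carrying `‖c‖` to `c` transports the lune. -/
lemma lintegral_lune_eq_complex (c : EuclideanSpace ℝ (Fin 2)) (r1 r2 : ℝ) (hc : c ≠ 0)
    (G : ℝ → ENNReal) :
    ∫⁻ y in ball c r1 \ ball (0 : EuclideanSpace ℝ (Fin 2)) r2, G ‖y‖ =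
      ∫⁻ z in ball ((‖c‖ : ℝ) : ℂ) r1 \ ball (0 : ℂ) r2, G ‖z‖ := by
  let e := Complex.orthonormalBasisOneI.repr
  let w : ℂ := e.symm c
  have hw : ‖w‖ = ‖c‖ := e.symm.norm_map c
  have hc' : ‖c‖ ≠ 0 := norm_ne_zero_iff.mpr hc
  let u : Circle := ⟨w / (‖c‖ : ℝ), by
    change _ ∈ sphere (0 : ℂ) 1
    rw [mem_sphere_zero_iff_norm, norm_div, hw, Complex.norm_real, norm_norm, div_self hc']⟩
  let φ : ℂ ≃ₗᵢ[ℝ] EuclideanSpace ℝ (Fin 2) := (rotation u).trans e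
  have hφ : φ ((‖c‖ : ℝ) : ℂ) = c := by
    have : rotation u ((‖c‖ : ℝ) : ℂ) = w := by
      rw [rotation_apply]
      exact div_mul_cancel₀ _ (Complex.ofReal_ne_zero.mpr hc')
    change e (rotation u ((‖c‖ : ℝ) : ℂ)) = c
    rw [this]
    exact e.apply_symm_apply c
  have hpre : φ ⁻¹' (ball c r1 \ ball 0 r2) = ball ((‖c‖ : ℝ) : ℂ) r1 \ ball (0 : ℂ) r2 := by
    ext z
    have h : dist (φ z) c = dist z ((‖c‖ : ℝ) : ℂ) := by
      conv_lhs => rw [← hφ]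
      exact φ.dist_map _ _
    simp only [Set.mem_preimage, Set.mem_sdiff, mem_ball, h, dist_zero_right, φ.norm_map]
  have hemb : MeasurableEmbedding φ := φ.toMeasurableEquiv.measurableEmbedding
  have := φ.measurePreserving.setLIntegral_comp_preimage_emb hemb (fun y => G ‖y‖)
    (ball c r1 \ ball 0 r2)
  rw [← this, hpre]
  simp only [φ.norm_map]

/-- The angular integral over the circle of radius `r`, carrying the Jacobian factor `r`. -/
lemma lintegral_angle {r v r1 r2 : ℝ} (hr : 0 < r) (hv : 0 < v) (hr1 : 0 < r1)
    (g : ℝ → ℝ) (hg0 : ∀ x, 0 ≤ g x) :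
    ∫⁻ θ in Set.Ioo (-π) π, ENNReal.ofReal r • (ball (v : ℂ) r1 \ ball (0 : ℂ) r2).indicator
        (fun z => ENNReal.ofReal (g ‖z‖)) (Complex.polarCoord.symm (r, θ)) =
      (Set.Ici r2).indicator (fun r => ENNReal.ofReal
        (2 * arccos ((r ^ 2 + v ^ 2 - r1 ^ 2) / (2 * r * v)) * g r * r)) r := by
  set a := (r ^ 2 + v ^ 2 - r1 ^ 2) / (2 * r * v) with ha
  have hnorm (θ : ℝ) : ‖Complex.polarCoord.symm (r, θ)‖ = r := by
    rw [Complex.norm_polarCoord_symm, abs_of_pos hr]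
  by_cases h : r2 ≤ r
  · have hfun : (fun θ : ℝ => ENNReal.ofReal r • (ball (v : ℂ) r1 \ ball (0 : ℂ) r2).indicator
        (fun z => ENNReal.ofReal (g ‖z‖)) (Complex.polarCoord.symm (r, θ))) =
        {θ | a < cos θ}.indicator (fun _ => ENNReal.ofReal r * ENNReal.ofReal (g r)) := by
      funext θ
      have hmem : Complex.polarCoord.symm (r, θ) ∈ ball (v : ℂ) r1 \ ball (0 : ℂ) r2 ↔
          θ ∈ {θ | a < cos θ} := by
        rw [Set.mem_sdiff, polar_mem_ball_iff hr hv hr1, mem_ball_zero_iff, hnorm]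
        simp [h, ha]
      by_cases hθ : θ ∈ {θ | a < cos θ}
      · rw [Set.indicator_of_mem hθ, Set.indicator_of_mem (hmem.mpr hθ), hnorm, smul_eq_mul]
      · rw [Set.indicator_of_notMem hθ, Set.indicator_of_notMem (mt hmem.mp hθ), smul_zero]
    have hmeas : MeasurableSet {θ | a < cos θ} := measurableSet_lt measurable_const measurable_cos
    rw [hfun, lintegral_indicator hmeas, Measure.restrict_restrict hmeas, setOf_lt_cos,
      setLIntegral_const, Real.volume_Ioo, Set.indicator_of_mem (Set.mem_Ici.mpr h),
      ← ENNReal.ofReal_mul hr.le, ← ENNReal.ofReal_mul (mul_nonneg hr.le (hg0 r))]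
    congr 1
    ring
  · rw [Set.indicator_of_notMem (by simpa using h)]
    have hout (θ : ℝ) : Complex.polarCoord.symm (r, θ) ∉ ball (v : ℂ) r1 \ ball (0 : ℂ) r2 := by
      intro hm
      refine hm.2 ?_
      rw [mem_ball_zero_iff, hnorm]
      exact not_le.mp h
    simp_rw [Set.indicator_of_notMem (hout _), smul_zero, lintegral_zero]

/-- Polar-coordinate identity for an integral of a radially symmetric function over
`B(c, r1) \ B(O, r2)` in the partially-overlapping regime. -/
theorem integral_radial_over_lune (c : EuclideanSpace ℝ (Fin 2)) (v r1 r2 : ℝ)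
    (hc : ‖c‖ = v) (hr1 : 0 < r1) (hr2 : 0 < r2) (hv : 0 < v)
    (h1 : r2 - r1 < v) (h2 : v < r1 + r2) (h3 : |v - r1| ≤ r2)
    (g : ℝ → ℝ) (hg : Measurable g) (hg0 : ∀ x, 0 ≤ g x) :
    ∫⁻ y in ball c r1 \ ball (0 : EuclideanSpace ℝ (Fin 2)) r2,
        ENNReal.ofReal (g ‖y‖) ∂volume
      = ∫⁻ r in Set.Ioo r2 (v + r1),
          ENNReal.ofReal
            (2 * Real.arccos ((r ^ 2 + v ^ 2 - r1 ^ 2) / (2 * r * v)) * g r * r) ∂volume := by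
  have hc0 : c ≠ 0 := norm_pos_iff.mp (hc ▸ hv)
  rw [lintegral_lune_eq_complex c r1 r2 hc0 (fun t => ENNReal.ofReal (g t)), hc]
  have hS : MeasurableSet (ball (v : ℂ) r1 \ ball (0 : ℂ) r2) :=
    measurableSet_ball.diff measurableSet_ball
  have hF : Measurable ((ball (v : ℂ) r1 \ ball (0 : ℂ) r2).indicator
      (fun z => ENNReal.ofReal (g ‖z‖))) :=
    (hg.comp measurable_norm).ennreal_ofReal.indicator hS
  have hsymm : Measurable (fun p : ℝ × ℝ => Complex.polarCoord.symm p) := by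
    simp only [Complex.polarCoord_symm_apply]
    fun_prop
  rw [← lintegral_indicator hS, ← Complex.lintegral_comp_polarCoord_symm]
  change ∫⁻ p in Set.Ioi (0 : ℝ) ×ˢ Set.Ioo (-π) π, _ = _
  rw [Measure.volume_eq_prod, setLIntegral_prod _ (by
      simp only [smul_eq_mul]
      exact (measurable_fst.ennreal_ofReal.mul (hF.comp hsymm)).aemeasurable),
    setLIntegral_congr_fun measurableSet_Ioi (fun r hr => lintegral_angle hr hv hr1 g hg0),
    ← lintegral_indicator measurableSet_Ioi, ← lintegral_indicator measurableSet_Ioo]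
  -- The two integrands may differ at the endpoint `r2`.
  refine lintegral_congr_ae ?_
  filter_upwards [Measure.ae_ne volume r2] with r hne
  rcases lt_or_gt_of_ne hne with h | h
  · rw [Set.indicator_of_notMem (s := Set.Ioo r2 (v + r1)) (fun hm => absurd hm.1 h.not_gt)]
    refine Set.indicator_apply_eq_zero.mpr fun _ => ?_
    exact Set.indicator_of_notMem (not_le.mpr h) _
  · have hr : 0 < r := hr2.trans h
    rw [Set.indicator_of_mem (Set.mem_Ioi.mpr hr), Set.indicator_of_mem (Set.mem_Ici.mpr h.le)]
    by_cases hlt : r < v + r1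
    · rw [Set.indicator_of_mem (Set.mem_Ioo.mpr ⟨h, hlt⟩)]
    · have ha : 1 ≤ (r ^ 2 + v ^ 2 - r1 ^ 2) / (2 * r * v) := by
        rw [le_div_iff₀ (by positivity)]
        nlinarith
      rw [Set.indicator_of_notMem (fun hm => hlt hm.2), arccos_of_one_le ha]
      simp
end

section
/- Let c ∈ ℝ² with ‖c‖ = v, let r1, r2, v > 0 satisfy v ≥ r1 + r2, and let α > 2, s > 0. Then ∫_{ℝ² \ (B(c, r1) ∪ B(O, r2))} (1 + ‖y‖^α / s)^{−1} dy = ∫_{r2}^{∞} 2π r·(1 + r^α/s)^{−1} dr − ∫_{v−r1}^{v+r1} 2·arccos((r² + v² − r1²)/(2 r v))·r·(1 + r^α/s)^{−1} dr. -/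
open MeasureTheory Metric Real

/-!
A linear isometry `ℂ ≃ ℝ²` sending the positive real `v` to `c` turns the claim into one about
balls in `ℂ`. As the two balls are disjoint, the integral outside their union is the integral
outside `B(0, r2)` minus the integral over `B(v, r1)`, which makes sense because `α > 2` makes the
integrand integrable on the plane. The first term is a radial integral, given by
`integral_fun_norm_addHaar`. For the second, in polar coordinates the circle of radius `r` meets
`B(v, r1)` where `q(r) < cos θ`, with `q(r) = (r² + v² - r1²) / (2rv)` by the law of cosines.
This is an arc of angular width `2 arccos q(r)` for every real `q(r)`, since `Real.arccos` is `π`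
below `-1` and `0` above `1`; it is empty unless `v - r1 < r < v + r1`.
-/

/-- The path-loss profile is integrable in the plane: it is dominated by a multiple of
`(1 + ‖z‖) ^ (-α)`. -/
lemma integrable_pathloss {α s : ℝ} (hα : 2 < α) (hs : 0 < s) :
    Integrable (fun z : ℂ => (1 + ‖z‖ ^ α / s)⁻¹) := by
  have hI : Integrable (fun z : ℂ => (1 + ‖z‖) ^ (-α)) :=
    integrable_one_add_norm (by simpa using hα)
  have hcont : Continuous (fun z : ℂ => (1 + ‖z‖ ^ α / s)⁻¹) := by
    refine Continuous.inv₀ ?_ fun z => by positivity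
    exact continuous_const.add
      ((continuous_norm.rpow_const fun _ => Or.inr (by linarith)).div_const s)
  refine (hI.const_mul (2 ^ α * (1 + s))).mono' hcont.aestronglyMeasurable ?_
  refine Filter.Eventually.of_forall fun z => ?_
  have h0 : 0 ≤ ‖z‖ := norm_nonneg z
  have hP : 0 ≤ ‖z‖ ^ α := by positivity
  rw [Real.norm_of_nonneg (by positivity), Real.rpow_neg (by positivity), ← div_eq_mul_inv,
    inv_eq_one_div, div_le_div_iff₀ (by positivity) (by positivity), one_mul]
  have h1 : (1 + ‖z‖) ^ α ≤ 2 ^ α * (1 + ‖z‖ ^ α) := by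
    rcases le_total ‖z‖ 1 with h | h
    · calc (1 + ‖z‖) ^ α ≤ 2 ^ α := by
            apply Real.rpow_le_rpow <;> linarith
        _ ≤ _ := le_mul_of_one_le_right (by positivity) (by linarith)
    · calc (1 + ‖z‖) ^ α ≤ (2 * ‖z‖) ^ α := by
            apply Real.rpow_le_rpow <;> linarith
        _ = 2 ^ α * ‖z‖ ^ α := Real.mul_rpow (by norm_num) h0
        _ ≤ _ := by gcongr; linarith
  refine h1.trans ?_
  rw [mul_assoc]
  gcongr
  have : (1 + s) * (1 + ‖z‖ ^ α / s) = 1 + ‖z‖ ^ α + (s + ‖z‖ ^ α / s) := by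
    field_simp
    ring
  rw [this]
  have : 0 ≤ ‖z‖ ^ α / s := by positivity
  linarith

/-- No bound on `q` is needed, because `Real.arccos` is constant outside `[-1, 1]`. -/
lemma arc_eq (q : ℝ) :
    Set.Ioo (-π) π ∩ {θ | q < cos θ} = Set.Ioo (-arccos q) (arccos q) := by
  ext θ
  simp only [Set.mem_inter_iff, Set.mem_Ioo, Set.mem_ofPred_eq, ← abs_lt]
  constructor
  · rintro ⟨h1, h2⟩
    rw [← Real.cos_abs] at h2
    by_contra! h3
    have hq : -1 ≤ q := by
      by_contra! h
      rw [Real.arccos_of_le_neg_one h.le] at h3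
      linarith
    have := Real.cos_le_cos_of_nonneg_of_le_pi (Real.arccos_nonneg q) h1.le h3
    rw [Real.cos_arccos hq (h2.le.trans (Real.cos_le_one _))] at this
    linarith
  · intro h
    refine ⟨h.trans_le (Real.arccos_le_pi q), ?_⟩
    rw [← Real.cos_abs]
    have hq : q < 1 := by
      by_contra! h'
      rw [Real.arccos_of_one_le h'] at h
      linarith [abs_nonneg θ]
    have := Real.cos_lt_cos_of_nonneg_of_le_pi (abs_nonneg θ) (Real.arccos_le_pi q) h
    rcases le_total (-1) q with h1 | h1
    · rwa [Real.cos_arccos h1 hq.le] at this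
    · rw [Real.arccos_of_le_neg_one h1, Real.cos_pi] at this
      linarith

/-- The law of cosines. -/
lemma polar_mem_ball {v r1 r θ : ℝ} (hv : 0 < v) (hr1 : 0 < r1) (hr : 0 < r) :
    Complex.polarCoord.symm (r, θ) ∈ ball (v : ℂ) r1 ↔
      (r ^ 2 + v ^ 2 - r1 ^ 2) / (2 * r * v) < cos θ := by
  rw [mem_ball, dist_eq_norm, ← sq_lt_sq₀ (norm_nonneg _) hr1.le, Complex.sq_norm,
    Complex.normSq_apply, div_lt_iff₀ (by positivity)]
  have h1 : (Complex.polarCoord.symm (r, θ) - (v : ℂ)).re = r * cos θ - v := by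
    simp [Complex.cos_ofReal_re, Complex.sin_ofReal_im]
  have h2 : (Complex.polarCoord.symm (r, θ) - (v : ℂ)).im = r * sin θ := by
    simp [Complex.cos_ofReal_im, Complex.sin_ofReal_re]
  rw [h1, h2]
  have : (r * cos θ - v) * (r * cos θ - v) + r * sin θ * (r * sin θ)
      = r ^ 2 + v ^ 2 - cos θ * (2 * r * v) := by
    linear_combination r ^ 2 * Real.sin_sq_add_cos_sq θ
  rw [this]
  constructor <;> intro h <;> linarith

/-- The integral of a radial function over a ball that need not be centred at the origin, with the
origin outside it. -/
lemma integral_ball_radial {v r1 : ℝ} (hv : 0 < v) (hr1 : 0 < r1) (hle : r1 ≤ v) {g : ℝ → ℝ}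
    (hg : ContinuousOn g (Set.Ici 0)) :
    ∫ z in ball (v : ℂ) r1, g ‖z‖ =
      ∫ r in Set.Ioo (v - r1) (v + r1),
        2 * arccos ((r ^ 2 + v ^ 2 - r1 ^ 2) / (2 * r * v)) * r * g r := by
  set q : ℝ → ℝ := fun r => (r ^ 2 + v ^ 2 - r1 ^ 2) / (2 * r * v) with hq
  let A : Set (ℝ × ℝ) := Complex.polarCoord.symm ⁻¹' ball (v : ℂ) r1
  have hsymm : Continuous (Complex.polarCoord.symm : ℝ × ℝ → ℂ) := by
    have : (Complex.polarCoord.symm : ℝ × ℝ → ℂ) =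
        fun p => (p.1 : ℂ) * (Real.cos p.2 + Real.sin p.2 * Complex.I) := by
      ext p
      exact Complex.polarCoord_symm_apply p
    rw [this]
    fun_prop
  have hA : MeasurableSet A := (isOpen_ball.preimage hsymm).measurableSet
  let K : Set (ℝ × ℝ) := Set.Icc 0 (v + r1) ×ˢ Set.Icc (-π) π
  have hK : IntegrableOn (fun p : ℝ × ℝ => p.1 * g p.1) K := by
    refine ContinuousOn.integrableOn_compact (isCompact_Icc.prod isCompact_Icc) ?_
    refine continuous_fst.continuousOn.mul (hg.comp continuous_fst.continuousOn ?_)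
    exact fun p hp => hp.1.1
  have hsub : polarCoord.target ∩ A ⊆ K := by
    rintro ⟨r, θ⟩ ⟨⟨hr, hθ⟩, h⟩
    simp only [Set.mem_Ioi] at hr
    refine ⟨⟨hr.le, ?_⟩, ⟨hθ.1.le, hθ.2.le⟩⟩
    have h1 : ‖Complex.polarCoord.symm (r, θ) - (v : ℂ)‖ < r1 := by
      simpa [A, dist_eq_norm] using! h
    have h2 := norm_sub_norm_le (Complex.polarCoord.symm (r, θ)) (v : ℂ)
    rw [Complex.norm_polarCoord_symm, Complex.norm_real, Real.norm_of_nonneg hv.le,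
      abs_of_pos hr] at h2
    change r ≤ v + r1
    linarith
  have hint : IntegrableOn (A.indicator fun p : ℝ × ℝ => p.1 * g p.1)
      (Set.Ioi (0 : ℝ) ×ˢ Set.Ioo (-π) π) := by
    rw [IntegrableOn, integrable_indicator_iff hA, IntegrableOn, Measure.restrict_restrict hA,
      Set.inter_comm]
    exact hK.mono_set hsub
  calc ∫ z in ball (v : ℂ) r1, g ‖z‖
      = ∫ z, (ball (v : ℂ) r1).indicator (fun z => g ‖z‖) z :=
        (integral_indicator measurableSet_ball).symm
    _ = ∫ p in Set.Ioi (0 : ℝ) ×ˢ Set.Ioo (-π) π, A.indicator (fun p => p.1 * g p.1) p := by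
        rw [← Complex.integral_comp_polarCoord_symm]
        refine setIntegral_congr_fun polarCoord.open_target.measurableSet fun p hp => ?_
        have hp1 : 0 < p.1 := hp.1
        by_cases h : Complex.polarCoord.symm p ∈ ball (v : ℂ) r1
        · have h' : p ∈ A := h
          simp only [Set.indicator_of_mem h, Set.indicator_of_mem h',
            Complex.norm_polarCoord_symm, abs_of_pos hp1, smul_eq_mul]
        · have h' : p ∉ A := h
          simp only [Set.indicator_of_notMem h, Set.indicator_of_notMem h', smul_zero]
    _ = ∫ r in Set.Ioi (0 : ℝ), ∫ θ in Set.Ioo (-π) π,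
          A.indicator (fun p => p.1 * g p.1) (r, θ) := setIntegral_prod _ hint
    _ = ∫ r in Set.Ioi (0 : ℝ), 2 * arccos (q r) * r * g r := by
        refine setIntegral_congr_fun measurableSet_Ioi fun r hr => ?_
        have hind : ∀ θ, A.indicator (fun p => p.1 * g p.1) (r, θ)
            = {θ | q r < cos θ}.indicator (fun _ => r * g r) θ := fun θ => by
          have hiff : (r, θ) ∈ A ↔ θ ∈ {θ | q r < cos θ} := polar_mem_ball hv hr1 hr
          by_cases h : (r, θ) ∈ A
          · rw [Set.indicator_of_mem h, Set.indicator_of_mem (hiff.1 h)]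
          · rw [Set.indicator_of_notMem h, Set.indicator_of_notMem (mt hiff.2 h)]
        simp only [hind]
        rw [setIntegral_indicator (measurableSet_lt measurable_const Real.measurable_cos), arc_eq,
          setIntegral_const, Real.volume_real_Ioo_of_le (by linarith [arccos_nonneg (q r)]),
          smul_eq_mul]
        ring
    _ = _ := by
        refine setIntegral_eq_of_subset_of_forall_sdiff_eq_zero measurableSet_Ioi ?_ ?_
        · intro r hr
          simp only [Set.mem_Ioo, Set.mem_Ioi] at hr ⊢
          linarith
        · rintro r ⟨hr, hn⟩
          simp only [Set.mem_Ioi] at hr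
          have h1 : 1 ≤ q r := by
            rw [hq, one_le_div (by positivity)]
            have : r1 ^ 2 ≤ (r - v) ^ 2 := by
              rw [← sq_abs (r - v), sq_le_sq₀ hr1.le (abs_nonneg _)]
              by_contra! h
              rw [abs_lt] at h
              exact hn ⟨by linarith, by linarith⟩
            linarith
          rw [Real.arccos_of_one_le h1]
          ring

/-- The integral of a radial function outside a centred ball. -/
lemma integral_compl_ball_radial {r2 : ℝ} (hr2 : 0 < r2) (g : ℝ → ℝ) :
    ∫ z in (ball (0 : ℂ) r2)ᶜ, g ‖z‖ = ∫ r in Set.Ioi r2, 2 * π * r * g r := by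
  have h : ∀ z : ℂ, (ball (0 : ℂ) r2)ᶜ.indicator (fun z => g ‖z‖) z
      = (Set.Ici r2).indicator g ‖z‖ := fun z => by
    by_cases hz : r2 ≤ ‖z‖
    · rw [Set.indicator_of_mem (by simpa using hz), Set.indicator_of_mem (by simpa using hz)]
    · rw [Set.indicator_of_notMem (by simpa using hz),
        Set.indicator_of_notMem (by simpa using hz)]
  have hvol : (volume : Measure ℂ).real (ball 0 1) = π := by
    simp [measureReal_def, Complex.volume_ball]
  have h2 : ∀ y : ℝ, y * (Set.Ici r2).indicator g y
      = (Set.Ici r2).indicator (fun y => y * g y) y := fun y => by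
    by_cases hy : y ∈ Set.Ici r2 <;> simp [hy]
  rw [← integral_indicator measurableSet_ball.compl, integral_congr_ae (ae_of_all _ h),
    integral_fun_norm_addHaar, Complex.finrank_real_complex, hvol]
  simp only [Nat.add_one_sub_one, pow_one, smul_eq_mul, nsmul_eq_mul, Nat.cast_ofNat, h2]
  rw [setIntegral_indicator measurableSet_Ici,
    Set.inter_eq_right.2 (Set.Ici_subset_Ioi.2 hr2), integral_Ici_eq_integral_Ioi,
    ← mul_assoc, ← integral_const_mul]
  simp only [mul_assoc]

/-- A linear isometry from `ℂ` to the Euclidean plane can be rotated to send `‖c‖` to `c`. -/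
lemma exists_isometry (c : EuclideanSpace ℝ (Fin 2)) :
    ∃ φ : ℂ ≃ₗᵢ[ℝ] EuclideanSpace ℝ (Fin 2), φ (‖c‖ : ℂ) = c := by
  let e := Complex.orthonormalBasisOneI.repr
  refine ⟨(rotation (Circle.exp (Complex.arg (e.symm c)))).trans e, ?_⟩
  rw [LinearIsometryEquiv.trans_apply, rotation_apply, Circle.coe_exp,
    ← e.symm.norm_map c, mul_comm, Complex.norm_mul_exp_arg_mul_I, e.apply_symm_apply]

/-- The exponent integral of Lemma 4, disjoint-circles case (`v ≥ r1 + r2`): integral of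
`y ↦ (1 + ‖y‖^α/s)⁻¹` over the plane outside the exclusion zone `B(c, r1) ∪ B(O, r2)`. -/
theorem integral_pathloss_outside_union_disjoint (c : EuclideanSpace ℝ (Fin 2))
    (v r1 r2 α s : ℝ) (hc : ‖c‖ = v) (hr1 : 0 < r1) (hr2 : 0 < r2) (hv : 0 < v)
    (hcase : r1 + r2 ≤ v) (hα : 2 < α) (hs : 0 < s) :
    ∫ y in (ball c r1 ∪ ball (0 : EuclideanSpace ℝ (Fin 2)) r2)ᶜ,
        (1 + ‖y‖ ^ α / s)⁻¹ ∂volume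
      = (∫ r in Set.Ioi r2, 2 * π * r * (1 + r ^ α / s)⁻¹)
        - ∫ r in Set.Ioo (v - r1) (v + r1),
            2 * Real.arccos ((r ^ 2 + v ^ 2 - r1 ^ 2) / (2 * r * v)) * r
              * (1 + r ^ α / s)⁻¹ := by
  obtain ⟨φ, hφ⟩ := exists_isometry c
  rw [hc] at hφ
  have hpre : φ ⁻¹' (ball c r1 ∪ ball (0 : EuclideanSpace ℝ (Fin 2)) r2)ᶜ
      = (ball (0 : ℂ) r2)ᶜ \ ball (v : ℂ) r1 := by
    rw [← hφ, ← φ.map_zero, Set.preimage_compl, Set.preimage_union, φ.preimage_ball,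
      φ.preimage_ball, Set.union_comm, Set.compl_union, φ.symm_apply_apply, φ.symm_apply_apply,
      Set.sdiff_eq]
  have hdisj : ball (v : ℂ) r1 ⊆ (ball (0 : ℂ) r2)ᶜ := by
    refine Set.disjoint_left.1 (ball_disjoint_ball ?_)
    rw [dist_zero_right, Complex.norm_real, Real.norm_of_nonneg hv.le]
    exact hcase
  have hg : ContinuousOn (fun t : ℝ => (1 + t ^ α / s)⁻¹) (Set.Ici 0) := by
    refine ContinuousOn.inv₀ ?_ fun t ht => ?_
    · exact (continuous_const.add
        ((Real.continuous_rpow_const (by linarith)).div_const s)).continuousOn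
    · have : 0 ≤ t ^ α := Real.rpow_nonneg ht α
      positivity
  rw [← φ.measurePreserving.setIntegral_preimage_emb
    φ.toHomeomorph.measurableEmbedding, hpre]
  simp only [φ.norm_map]
  rw [setIntegral_sdiff measurableSet_ball (integrable_pathloss hα hs).integrableOn hdisj,
    integral_compl_ball_radial hr2 (fun t => (1 + t ^ α / s)⁻¹),
    integral_ball_radial hv hr1 (by linarith) hg]
end
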